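/- Let l_1,…,l_n and r_1,…,r_n be d-dimensional bit vectors and let ℓ ≥ 1, p ∈ {0,1}, q ≥ 0 be integers, and let G = G_{L,R,ℓ,p,q}. For every pair of vertices s and t of G, if s ∈ V^L ∪ V^M and t ∈ V^L ∪ V^M, or s ∈ V^R ∪ V^M and t ∈ V^R ∪ V^M, then dist_G(s, t) ≤ 4ℓ − 2p + q. -/

import Mathlib

namespace GraphOV

/-- Two bit vectors (functions into `Fin 2`) are orthogonal if in every coordinate
at least one of them is `0`. -/
def Orth {d : ℕ} (a b : Fin d → Fin 2) : Prop := ∀ k, a k = 0 ∨ b k = 0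

/-- A system of internally disjoint paths joining exterior vertices from `E`:
for each path name `i : ι` we record its two endpoints and its length. -/
structure PathSys (E : Type) (ι : Type) where
  src : ι → E
  dst : ι → E
  len : ι → ℕ

namespace PathSys

variable {E ι : Type}

/-- Endpoints of zero-length paths get identified. -/
def idRel (S : PathSys E ι) (a b : E) : Prop :=
  ∃ i, S.len i = 0 ∧ S.src i = a ∧ S.dst i = b

/-- Vertices of the glued graph: exterior vertices (up to identification) together
with, for each path of length `m`, fresh interior vertices at positions `1,…,m-1`. -/
def Vert (S : PathSys E ι) : Type :=
  Quot S.idRel ⊕ Σ i : ι, {t : ℕ // 0 < t ∧ t < S.len i}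

/-- The vertex corresponding to an exterior vertex. -/
def ext (S : PathSys E ι) (a : E) : S.Vert := Sum.inl (Quot.mk _ a)

/-- The `t`-th vertex on the path named `i` (for `0 ≤ t ≤ S.len i`). -/
def pt (S : PathSys E ι) (i : ι) (t : ℕ) : S.Vert :=
  if h : 0 < t ∧ t < S.len i then Sum.inr ⟨i, t, h⟩
  else if t = 0 then S.ext (S.src i) else S.ext (S.dst i)

/-- The glued graph: consecutive vertices on each path are adjacent. -/
def graph (S : PathSys E ι) : SimpleGraph S.Vert :=
  SimpleGraph.fromRel fun a b =>
    ∃ i t, t + 1 ≤ S.len i ∧ a = S.pt i t ∧ b = S.pt i (t + 1)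

/-- The set of vertices lying on the path named `i`. -/
def onPath (S : PathSys E ι) (i : ι) : Set S.Vert :=
  {v | ∃ t ≤ S.len i, v = S.pt i t}

/-- A walk in the glued graph contains the path named `i` entirely if all vertices of
that path occur consecutively (in forward or backward order) on the walk. -/
def WalkContainsPath (S : PathSys E ι) {x y : S.Vert} (W : S.graph.Walk x y) (i : ι) : Prop :=
  ∃ a, a + S.len i ≤ W.length ∧
    ((∀ t ≤ S.len i, W.getVert (a + t) = S.pt i t) ∨
     (∀ t ≤ S.len i, W.getVert (a + t) = S.pt i (S.len i - t)))

end PathSys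

/-- The exterior vertices of the graph `G_{L,R,ℓ,p,q}`. -/
inductive Ext (n d : ℕ) : Type
  | uL : Fin n → Ext n d
  | uR : Fin n → Ext n d
  | vL : Fin n → Ext n d
  | vR : Fin n → Ext n d
  | wL : Fin d → Ext n d
  | wR : Fin d → Ext n d
  | xL : Ext n d
  | xR : Ext n d
  | yL : Ext n d
  | yR : Ext n d

/-- Names for the paths of the graph `G_{L,R,ℓ,p,q}`. -/
inductive Idx (n d : ℕ) (l r : Fin n → Fin d → Fin 2) : Type
  | uvL : Fin n → Idx n d l r
  | uvR : Fin n → Idx n d l r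
  | vxL : Fin n → Idx n d l r
  | vxR : Fin n → Idx n d l r
  | vwL : (i : Fin n) → (k : Fin d) → l i k = 1 → Idx n d l r
  | vwR : (j : Fin n) → (k : Fin d) → r j k = 1 → Idx n d l r
  | ywL : Fin d → Idx n d l r
  | ywR : Fin d → Idx n d l r
  | ww : Fin d → Idx n d l r
  | xyL : Idx n d l r
  | xyR : Idx n d l r
  | yy : Idx n d l r

/-- The path system defining the graph `G_{L,R,ℓ,p,q}`. -/
def sys (n d : ℕ) (l r : Fin n → Fin d → Fin 2) (ℓ p q : ℕ) :
    PathSys (Ext n d) (Idx n d l r) where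
  src := fun i => match i with
    | .uvL i => .uL i
    | .uvR i => .uR i
    | .vxL i => .vL i
    | .vxR i => .vR i
    | .vwL i _ _ => .vL i
    | .vwR j _ _ => .vR j
    | .ywL _ => .yL
    | .ywR _ => .yR
    | .ww k => .wL k
    | .xyL => .xL
    | .xyR => .xR
    | .yy => .yL
  dst := fun i => match i with
    | .uvL i => .vL i
    | .uvR i => .vR i
    | .vxL _ => .xL
    | .vxR _ => .xR
    | .vwL _ k _ => .wL k
    | .vwR _ k _ => .wR k
    | .ywL k => .wL k
    | .ywR k => .wR k
    | .ww k => .wR k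
    | .xyL => .yL
    | .xyR => .yR
    | .yy => .yR
  len := fun i => match i with
    | .uvL _ => ℓ - p
    | .uvR _ => ℓ - p
    | .vxL _ => ℓ
    | .vxR _ => ℓ
    | .vwL _ _ _ => ℓ
    | .vwR _ _ _ => ℓ
    | .ywL _ => ℓ
    | .ywR _ => ℓ
    | .ww _ => q
    | .xyL => ℓ - p
    | .xyR => ℓ - p
    | .yy => p + q

/-- The set `P_i^L`. -/
def PL (n d : ℕ) (l r : Fin n → Fin d → Fin 2) (ℓ p q : ℕ) (i : Fin n) :
    Set (sys n d l r ℓ p q).Vert :=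
  (sys n d l r ℓ p q).onPath (.uvL i) ∪
    ((sys n d l r ℓ p q).onPath (.vxL i) \ {(sys n d l r ℓ p q).ext .xL}) ∪
    ⋃ (k : Fin d) (h : l i k = 1),
      ((sys n d l r ℓ p q).onPath (.vwL i k h) \ {(sys n d l r ℓ p q).ext (.wL k)})

/-- The set `P_j^R`. -/
def PR (n d : ℕ) (l r : Fin n → Fin d → Fin 2) (ℓ p q : ℕ) (j : Fin n) :
    Set (sys n d l r ℓ p q).Vert :=
  (sys n d l r ℓ p q).onPath (.uvR j) ∪
    ((sys n d l r ℓ p q).onPath (.vxR j) \ {(sys n d l r ℓ p q).ext .xR}) ∪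
    ⋃ (k : Fin d) (h : r j k = 1),
      ((sys n d l r ℓ p q).onPath (.vwR j k h) \ {(sys n d l r ℓ p q).ext (.wR k)})

/-- The set `V^L`. -/
def VL (n d : ℕ) (l r : Fin n → Fin d → Fin 2) (ℓ p q : ℕ) :
    Set (sys n d l r ℓ p q).Vert := ⋃ i : Fin n, PL n d l r ℓ p q i

/-- The set `V^R`. -/
def VR (n d : ℕ) (l r : Fin n → Fin d → Fin 2) (ℓ p q : ℕ) :
    Set (sys n d l r ℓ p q).Vert := ⋃ j : Fin n, PR n d l r ℓ p q j

/-- The set `V^M` of all remaining vertices. -/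
def VM (n d : ℕ) (l r : Fin n → Fin d → Fin 2) (ℓ p q : ℕ) :
    Set (sys n d l r ℓ p q).Vert := (VL n d l r ℓ p q ∪ VR n d l r ℓ p q)ᶜ

/-!
A vertex of `V^L` has distance at most `2ℓ - p` from `x^L`; since `p ≤ 1`, this includes the
vertices of `π(v_i^L, w_k^L)` other than `w_k^L`, which are within `2ℓ - 1`. A vertex of `V^M` has
distance at most `ℓ + q` from `y^L`, hence at most `2ℓ - p + q` from `x^L`, so that a pair with at
least one vertex in `V^L` is joined through `x^L`. The distances of a vertex of `V^M` from `y^L` and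
`y^R` sum to at most `2ℓ + q`, so for a pair in `V^M` one of the routes through `y^L` and `y^R` has
length at most `2ℓ + q`. The side `R` is symmetric.
-/

theorem dist_le_dist_add_dist {V : Type*} {G : SimpleGraph V} (hG : G.Connected) (s t x : V) :
    G.dist s t ≤ G.dist s x + G.dist t x :=
  SimpleGraph.dist_comm (u := x) (v := t) ▸ hG.dist_triangle

namespace PathSys

variable {E ι : Type} {S : PathSys E ι}

theorem pt_zero (i : ι) : S.pt i 0 = S.ext (S.src i) := by
  simp [pt]

theorem pt_len (i : ι) : S.pt i (S.len i) = S.ext (S.dst i) := by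
  by_cases h : S.len i = 0
  · rw [h, pt_zero]
    exact congrArg Sum.inl (Quot.sound ⟨i, h, rfl, rfl⟩)
  · simp [pt, h]

theorem ext_src_mem_onPath (i : ι) : S.ext (S.src i) ∈ S.onPath i :=
  ⟨0, Nat.zero_le _, (pt_zero i).symm⟩

theorem ext_dst_mem_onPath (i : ι) : S.ext (S.dst i) ∈ S.onPath i :=
  ⟨S.len i, le_rfl, (pt_len i).symm⟩

theorem eq_ext_or_mem_onPath (s : S.Vert) : (∃ e, s = S.ext e) ∨ ∃ i, s ∈ S.onPath i := by
  rcases s with ⟨⟨e⟩⟩ | ⟨i, t, ht⟩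
  · exact .inl ⟨e, rfl⟩
  · exact .inr ⟨i, t, ht.2.le, (show S.pt i t = _ from dif_pos ht).symm⟩

theorem exists_walk_pt (i : ι) (t : ℕ) {m : ℕ} (h : t + m ≤ S.len i) :
    ∃ w : S.graph.Walk (S.pt i t) (S.pt i (t + m)), w.length ≤ m := by
  induction m with
  | zero => exact ⟨.nil, le_rfl⟩
  | succ m ih =>
    obtain ⟨w, hw⟩ := ih (by omega)
    by_cases heq : S.pt i (t + m) = S.pt i (t + (m + 1))
    · exact ⟨w.copy rfl heq, by rw [SimpleGraph.Walk.length_copy]; omega⟩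
    · have hadj : S.graph.Adj (S.pt i (t + m)) (S.pt i (t + (m + 1))) :=
        (SimpleGraph.fromRel_adj _ _ _).2 ⟨heq, .inl ⟨i, t + m, h, rfl, rfl⟩⟩
      exact ⟨w.concat hadj, by rw [SimpleGraph.Walk.length_concat]; omega⟩

theorem dist_pt_le (i : ι) {t m : ℕ} (h : t + m ≤ S.len i) :
    S.graph.dist (S.pt i t) (S.pt i (t + m)) ≤ m :=
  let ⟨w, hw⟩ := exists_walk_pt i t h
  (SimpleGraph.dist_le w).trans hw

theorem reachable_src_of_mem_onPath {i : ι} {s : S.Vert} (hs : s ∈ S.onPath i) :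
    S.graph.Reachable (S.ext (S.src i)) s := by
  obtain ⟨t, ht, rfl⟩ := hs
  obtain ⟨w, -⟩ := exists_walk_pt i 0 (m := t) (by rwa [zero_add])
  rw [pt_zero, zero_add] at w
  exact ⟨w⟩

theorem reachable_src_dst (i : ι) : S.graph.Reachable (S.ext (S.src i)) (S.ext (S.dst i)) :=
  reachable_src_of_mem_onPath (ext_dst_mem_onPath i)

theorem connected_of_reachable_ext (o : E)
    (h : ∀ e, S.graph.Reachable (S.ext e) (S.ext o)) : S.graph.Connected := by
  refine (SimpleGraph.connected_iff_exists_forall_reachable _).2 ⟨S.ext o, fun s => ?_⟩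
  obtain ⟨e, rfl⟩ | ⟨i, hs⟩ := eq_ext_or_mem_onPath s
  · exact (h e).symm
  · exact (h (S.src i)).symm.trans (reachable_src_of_mem_onPath hs)

theorem dist_src_add_dist_dst_le {i : ι} {s : S.Vert} (hs : s ∈ S.onPath i) :
    S.graph.dist s (S.ext (S.src i)) + S.graph.dist s (S.ext (S.dst i)) ≤ S.len i := by
  obtain ⟨t, ht, rfl⟩ := hs
  have hsrc := dist_pt_le (S := S) i (t := 0) (m := t) (by omega)
  have hdst := dist_pt_le (S := S) i (t := t) (m := S.len i - t) (by omega)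
  rw [pt_zero, zero_add, SimpleGraph.dist_comm] at hsrc
  rw [Nat.add_sub_cancel' ht, pt_len] at hdst
  omega

theorem dist_src_lt_len (hS : S.graph.Connected) {i : ι} {s : S.Vert}
    (hs : s ∈ S.onPath i \ {S.ext (S.dst i)}) :
    S.graph.dist s (S.ext (S.src i)) < S.len i := by
  have hpos := hS.pos_dist_of_ne hs.2
  have hsum := dist_src_add_dist_dst_le hs.1
  omega

theorem dist_src_dst_le (i : ι) :
    S.graph.dist (S.ext (S.src i)) (S.ext (S.dst i)) ≤ S.len i :=
  le_of_add_le_right (dist_src_add_dist_dst_le (ext_src_mem_onPath i))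

theorem dist_dst_le_dist_src_add (hS : S.graph.Connected) (s : S.Vert) (i : ι) :
    S.graph.dist s (S.ext (S.dst i)) ≤ S.graph.dist s (S.ext (S.src i)) + S.len i :=
  hS.dist_triangle.trans (Nat.add_le_add_left (dist_src_dst_le i) _)

theorem dist_src_le_dist_dst_add (hS : S.graph.Connected) (s : S.Vert) (i : ι) :
    S.graph.dist s (S.ext (S.src i)) ≤ S.graph.dist s (S.ext (S.dst i)) + S.len i :=
  hS.dist_triangle.trans
    (Nat.add_le_add_left (SimpleGraph.dist_comm.trans_le (dist_src_dst_le i)) _)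

end PathSys

section Construction

open PathSys

variable {n d ℓ p q : ℕ} {l r : Fin n → Fin d → Fin 2}

local notation "Γ" => sys n d l r ℓ p q

local notation "δ" => SimpleGraph.dist (PathSys.graph (sys n d l r ℓ p q))

theorem connected_sys : (Γ).graph.Connected := by
  have hyR : (Γ).graph.Reachable ((Γ).ext .yR) ((Γ).ext .yL) :=
    (reachable_src_dst (S := Γ) .yy).symm
  have hxL : (Γ).graph.Reachable ((Γ).ext .xL) ((Γ).ext .yL) := reachable_src_dst (S := Γ) .xyL
  have hxR : (Γ).graph.Reachable ((Γ).ext .xR) ((Γ).ext .yL) :=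
    (reachable_src_dst (S := Γ) .xyR).trans hyR
  have hvL (i : Fin n) : (Γ).graph.Reachable ((Γ).ext (.vL i)) ((Γ).ext .yL) :=
    (reachable_src_dst (S := Γ) (.vxL i)).trans hxL
  have hvR (i : Fin n) : (Γ).graph.Reachable ((Γ).ext (.vR i)) ((Γ).ext .yL) :=
    (reachable_src_dst (S := Γ) (.vxR i)).trans hxR
  refine connected_of_reachable_ext .yL fun e => ?_
  cases e with
  | uL i => exact (reachable_src_dst (S := Γ) (.uvL i)).trans (hvL i)
  | uR i => exact (reachable_src_dst (S := Γ) (.uvR i)).trans (hvR i)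
  | vL i => exact hvL i
  | vR i => exact hvR i
  | wL k => exact (reachable_src_dst (S := Γ) (.ywL k)).symm
  | wR k => exact (reachable_src_dst (S := Γ) (.ywR k)).symm.trans hyR
  | xL => exact hxL
  | xR => exact hxR
  | yL => exact .rfl
  | yR => exact hyR

theorem dist_xL_le_of_mem_VL (hp : p ≤ 1) {s : (Γ).Vert} (hs : s ∈ VL n d l r ℓ p q) :
    δ s ((Γ).ext .xL) ≤ 2 * ℓ - p := by
  simp only [VL, PL, Set.mem_iUnion, Set.mem_union] at hs
  obtain ⟨i, hs⟩ := hs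
  have via_v : δ s ((Γ).ext .xL) ≤ δ s ((Γ).ext (.vL i)) + ℓ :=
    dist_dst_le_dist_src_add connected_sys s (.vxL i)
  obtain (huv | hvx) | ⟨_, _, hvw⟩ := hs
  · have : δ s ((Γ).ext (.uL i)) + δ s ((Γ).ext (.vL i)) ≤ ℓ - p := dist_src_add_dist_dst_le huv
    omega
  · have : δ s ((Γ).ext (.vL i)) + δ s ((Γ).ext .xL) ≤ ℓ := dist_src_add_dist_dst_le hvx.1
    omega
  · have : δ s ((Γ).ext (.vL i)) < ℓ := dist_src_lt_len connected_sys hvw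
    omega

theorem dist_xR_le_of_mem_VR (hp : p ≤ 1) {s : (Γ).Vert} (hs : s ∈ VR n d l r ℓ p q) :
    δ s ((Γ).ext .xR) ≤ 2 * ℓ - p := by
  simp only [VR, PR, Set.mem_iUnion, Set.mem_union] at hs
  obtain ⟨j, hs⟩ := hs
  have via_v : δ s ((Γ).ext .xR) ≤ δ s ((Γ).ext (.vR j)) + ℓ :=
    dist_dst_le_dist_src_add connected_sys s (.vxR j)
  obtain (huv | hvx) | ⟨_, _, hvw⟩ := hs
  · have : δ s ((Γ).ext (.uR j)) + δ s ((Γ).ext (.vR j)) ≤ ℓ - p := dist_src_add_dist_dst_le huv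
    omega
  · have : δ s ((Γ).ext (.vR j)) + δ s ((Γ).ext .xR) ≤ ℓ := dist_src_add_dist_dst_le hvx.1
    omega
  · have : δ s ((Γ).ext (.vR j)) < ℓ := dist_src_lt_len connected_sys hvw
    omega

/-- A vertex is central if it is close to both `y` vertices, individually and in sum; this is
the property of the vertices of `V^M` that the distance bound uses. -/
structure IsCentral (s : (Γ).Vert) : Prop where
  dist_yL_le : δ s ((Γ).ext .yL) ≤ ℓ + q
  dist_yR_le : δ s ((Γ).ext .yR) ≤ ℓ + q
  dist_yL_add_dist_yR_le : δ s ((Γ).ext .yL) + δ s ((Γ).ext .yR) ≤ 2 * ℓ + q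

theorem isCentral_of_mem_ww {k : Fin d} {s : (Γ).Vert} (hs : s ∈ (Γ).onPath (.ww k)) :
    IsCentral s := by
  have on_path : δ s ((Γ).ext (.wL k)) + δ s ((Γ).ext (.wR k)) ≤ q := dist_src_add_dist_dst_le hs
  have left : δ s ((Γ).ext .yL) ≤ δ s ((Γ).ext (.wL k)) + ℓ :=
    dist_src_le_dist_dst_add connected_sys s (.ywL k)
  have right : δ s ((Γ).ext .yR) ≤ δ s ((Γ).ext (.wR k)) + ℓ :=
    dist_src_le_dist_dst_add connected_sys s (.ywR k)
  constructor <;> omega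

theorem isCentral_of_mem_yy (hpℓ : p ≤ ℓ) {s : (Γ).Vert} (hs : s ∈ (Γ).onPath .yy) :
    IsCentral s := by
  have on_path : δ s ((Γ).ext .yL) + δ s ((Γ).ext .yR) ≤ p + q := dist_src_add_dist_dst_le hs
  constructor <;> omega

theorem isCentral_of_dist_yL_le (hpℓ : p ≤ ℓ) {s : (Γ).Vert}
    (hs : δ s ((Γ).ext .yL) ≤ ℓ - p) : IsCentral s := by
  have across : δ s ((Γ).ext .yR) ≤ δ s ((Γ).ext .yL) + (p + q) :=
    dist_dst_le_dist_src_add connected_sys s .yy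
  constructor <;> omega

theorem isCentral_of_dist_yR_le (hpℓ : p ≤ ℓ) {s : (Γ).Vert}
    (hs : δ s ((Γ).ext .yR) ≤ ℓ - p) : IsCentral s := by
  have across : δ s ((Γ).ext .yL) ≤ δ s ((Γ).ext .yR) + (p + q) :=
    dist_src_le_dist_dst_add connected_sys s .yy
  constructor <;> omega

theorem isCentral_of_mem_xyL (hpℓ : p ≤ ℓ) {s : (Γ).Vert} (hs : s ∈ (Γ).onPath .xyL) :
    IsCentral s :=
  isCentral_of_dist_yL_le hpℓ (le_of_add_le_right (dist_src_add_dist_dst_le hs))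

theorem isCentral_of_mem_xyR (hpℓ : p ≤ ℓ) {s : (Γ).Vert} (hs : s ∈ (Γ).onPath .xyR) :
    IsCentral s :=
  isCentral_of_dist_yR_le hpℓ (le_of_add_le_right (dist_src_add_dist_dst_le hs))

theorem isCentral_of_mem_ywL (hp : p ≤ 1) {k : Fin d} {s : (Γ).Vert}
    (hs : s ∈ (Γ).onPath (.ywL k)) : IsCentral s := by
  by_cases hw : s = (Γ).ext (.wL k)
  · exact isCentral_of_mem_ww (hw ▸ ext_src_mem_onPath (S := Γ) (.ww k))
  · have : δ s ((Γ).ext .yL) < ℓ := dist_src_lt_len connected_sys ⟨hs, hw⟩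
    exact isCentral_of_dist_yL_le (by omega) (by omega)

theorem isCentral_of_mem_ywR (hp : p ≤ 1) {k : Fin d} {s : (Γ).Vert}
    (hs : s ∈ (Γ).onPath (.ywR k)) : IsCentral s := by
  by_cases hw : s = (Γ).ext (.wR k)
  · exact isCentral_of_mem_ww (hw ▸ ext_dst_mem_onPath (S := Γ) (.ww k))
  · have : δ s ((Γ).ext .yR) < ℓ := dist_src_lt_len connected_sys ⟨hs, hw⟩
    exact isCentral_of_dist_yR_le (by omega) (by omega)

theorem exists_mem_onPath (s : (Γ).Vert) : ∃ i, s ∈ (Γ).onPath i := by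
  obtain ⟨e, rfl⟩ | hs := eq_ext_or_mem_onPath s
  · cases e with
    | uL i => exact ⟨_, ext_src_mem_onPath (S := Γ) (.uvL i)⟩
    | uR i => exact ⟨_, ext_src_mem_onPath (S := Γ) (.uvR i)⟩
    | vL i => exact ⟨_, ext_dst_mem_onPath (S := Γ) (.uvL i)⟩
    | vR i => exact ⟨_, ext_dst_mem_onPath (S := Γ) (.uvR i)⟩
    | wL k => exact ⟨_, ext_src_mem_onPath (S := Γ) (.ww k)⟩
    | wR k => exact ⟨_, ext_dst_mem_onPath (S := Γ) (.ww k)⟩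
    | xL => exact ⟨_, ext_src_mem_onPath (S := Γ) .xyL⟩
    | xR => exact ⟨_, ext_src_mem_onPath (S := Γ) .xyR⟩
    | yL => exact ⟨_, ext_dst_mem_onPath (S := Γ) .xyL⟩
    | yR => exact ⟨_, ext_dst_mem_onPath (S := Γ) .xyR⟩
  · exact hs

theorem isCentral_of_mem_VM (hp : p ≤ 1) (hpℓ : p ≤ ℓ) {s : (Γ).Vert}
    (hs : s ∈ VM n d l r ℓ p q) : IsCentral s := by
  simp only [VM, VL, VR, PL, PR, Set.mem_compl_iff, Set.mem_union, Set.mem_iUnion, Set.mem_sdiff,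
    Set.mem_singleton_iff, not_or, not_exists, not_and, not_not] at hs
  obtain ⟨notMem_VL, notMem_VR⟩ := hs
  obtain ⟨i, hi⟩ := exists_mem_onPath s
  cases i with
  | uvL i => exact absurd hi (notMem_VL i).1.1
  | uvR j => exact absurd hi (notMem_VR j).1.1
  | vxL i =>
    obtain rfl := (notMem_VL i).1.2 hi
    exact isCentral_of_mem_xyL hpℓ (ext_src_mem_onPath (S := Γ) .xyL)
  | vxR j =>
    obtain rfl := (notMem_VR j).1.2 hi
    exact isCentral_of_mem_xyR hpℓ (ext_src_mem_onPath (S := Γ) .xyR)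
  | vwL i k hk =>
    obtain rfl := (notMem_VL i).2 k hk hi
    exact isCentral_of_mem_ww (ext_src_mem_onPath (S := Γ) (.ww k))
  | vwR j k hk =>
    obtain rfl := (notMem_VR j).2 k hk hi
    exact isCentral_of_mem_ww (ext_dst_mem_onPath (S := Γ) (.ww k))
  | ywL k => exact isCentral_of_mem_ywL hp hi
  | ywR k => exact isCentral_of_mem_ywR hp hi
  | ww k => exact isCentral_of_mem_ww hi
  | xyL => exact isCentral_of_mem_xyL hpℓ hi
  | xyR => exact isCentral_of_mem_xyR hpℓ hi
  | yy => exact isCentral_of_mem_yy hpℓ hi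

theorem IsCentral.dist_xL_le (hpℓ : p ≤ ℓ) {s : (Γ).Vert} (hs : IsCentral s) :
    δ s ((Γ).ext .xL) ≤ 2 * ℓ - p + q := by
  have via_y : δ s ((Γ).ext .xL) ≤ δ s ((Γ).ext .yL) + (ℓ - p) :=
    dist_src_le_dist_dst_add connected_sys s .xyL
  have := hs.dist_yL_le
  omega

theorem IsCentral.dist_xR_le (hpℓ : p ≤ ℓ) {s : (Γ).Vert} (hs : IsCentral s) :
    δ s ((Γ).ext .xR) ≤ 2 * ℓ - p + q := by
  have via_y : δ s ((Γ).ext .xR) ≤ δ s ((Γ).ext .yR) + (ℓ - p) :=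
    dist_src_le_dist_dst_add connected_sys s .xyR
  have := hs.dist_yR_le
  omega

theorem IsCentral.dist_le {s t : (Γ).Vert} (hs : IsCentral s) (ht : IsCentral t) :
    δ s t ≤ 2 * ℓ + q := by
  have via_yL := dist_le_dist_add_dist connected_sys s t ((Γ).ext .yL)
  have via_yR := dist_le_dist_add_dist connected_sys s t ((Γ).ext .yR)
  have := hs.dist_yL_add_dist_yR_le
  have := ht.dist_yL_add_dist_yR_le
  omega

theorem dist_le_of_hub (hpℓ : p ≤ ℓ) {x s t : (Γ).Vert}
    (hx : ∀ v : (Γ).Vert, IsCentral v → δ v x ≤ 2 * ℓ - p + q)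
    (hs : δ s x ≤ 2 * ℓ - p ∨ IsCentral s) (ht : δ t x ≤ 2 * ℓ - p ∨ IsCentral t) :
    δ s t ≤ 4 * ℓ - 2 * p + q := by
  have via_x := dist_le_dist_add_dist connected_sys s t x
  obtain hs | hs := hs <;> obtain ht | ht := ht
  · omega
  · have := hx t ht
    omega
  · have := hx s hs
    omega
  · have := hs.dist_le ht
    omega

end Construction

theorem dist_same_side (n d ℓ p q : ℕ) (hn : 1 ≤ n) (hd : 1 ≤ d) (hℓ : 1 ≤ ℓ)
    (hp : p ≤ 1) (l r : Fin n → Fin d → Fin 2) :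
    ∀ s t : (sys n d l r ℓ p q).Vert,
      ((s ∈ VL n d l r ℓ p q ∪ VM n d l r ℓ p q ∧
        t ∈ VL n d l r ℓ p q ∪ VM n d l r ℓ p q) ∨
       (s ∈ VR n d l r ℓ p q ∪ VM n d l r ℓ p q ∧
        t ∈ VR n d l r ℓ p q ∪ VM n d l r ℓ p q)) →
      (sys n d l r ℓ p q).graph.dist s t ≤ 4 * ℓ - 2 * p + q := by
  have hpℓ : p ≤ ℓ := hp.trans hℓ
  rintro s t (⟨hs, ht⟩ | ⟨hs, ht⟩)
  · exact dist_le_of_hub hpℓ (fun _ h => h.dist_xL_le hpℓ)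
      (hs.imp (dist_xL_le_of_mem_VL hp) (isCentral_of_mem_VM hp hpℓ))
      (ht.imp (dist_xL_le_of_mem_VL hp) (isCentral_of_mem_VM hp hpℓ))
  · exact dist_le_of_hub hpℓ (fun _ h => h.dist_xR_le hpℓ)
      (hs.imp (dist_xR_le_of_mem_VR hp) (isCentral_of_mem_VM hp hpℓ))
      (ht.imp (dist_xR_le_of_mem_VR hp) (isCentral_of_mem_VM hp hpℓ))

end GraphOV
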